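/- Fix λ > 0. The transform 𝐓 : L⁰₊ → L⁰₊ is monotone: for X₁, X₂ ∈ L⁰₊, if X₁ ≥ X₂ a.s. then 𝐓X₁ ≥ 𝐓X₂ a.s. -/

import Mathlib

/-!
If `X₁ ≥ X₂` a.s., then `E[e^{-aX₁}] ≤ E[e^{-aX₂}]` for every `a > 0`, hence `ψ_{X₂} ≤ ψ_{X₁}`
pointwise (`psi_mono`) and `{y | z ≤ ψ_{X₂}(y)} ⊆ {y | z ≤ ψ_{X₁}(y)}`. Taking suprema gives the
monotonicity of the generalized inverse at `z = λρ(ω) > 0`. The larger set is bounded above by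
the exponential decay of `ψ_{X₁}` (`psi_le`, `bddAbove_psi`). Nonemptiness of the smaller set is
not needed: `sSup ∅ = 0` does not exceed the truncation level `0`.
-/

open MeasureTheory Filter Set
open scoped ENNReal

noncomputable section

variable {Ω : Type*} [MeasurableSpace Ω]

/-- Entropic risk measure `h_a(X) = (1/a) log E[e^{-aX}]`. -/
def entropic (P : Measure Ω) (a : ℝ) (X : Ω → ℝ) : ℝ :=
  (1 / a) * Real.log (∫ ω, Real.exp (-a * X ω) ∂P)

/-- Weighted entropic risk measure `h(X) = ∫_{[a₀,a₁]} h_a(X) m(da)`. -/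
def werm (P : Measure Ω) (m : Measure ℝ) (a₀ a₁ : ℝ) (X : Ω → ℝ) : ℝ :=
  ∫ a in Set.Icc a₀ a₁, entropic P a X ∂m

/-- Marginal risk density transform `h′(X) = -∫_{[a₀,a₁]} e^{-aX}/E[e^{-aX}] m(da)`. -/
def hprime (P : Measure Ω) (m : Measure ℝ) (a₀ a₁ : ℝ) (X : Ω → ℝ) (ω : Ω) : ℝ :=
  -∫ a in Set.Icc a₀ a₁, Real.exp (-a * X ω) / (∫ ω', Real.exp (-a * X ω') ∂P) ∂m

/-- Extended-real-valued expectation `E[f] = ∫ f⁺ - ∫ f⁻ ∈ [-∞,∞]`. -/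
def eint (P : Measure Ω) (f : Ω → ℝ) : EReal :=
  ((∫⁻ ω, ENNReal.ofReal (f ω) ∂P : ℝ≥0∞) : EReal)
    - ((∫⁻ ω, ENNReal.ofReal (-(f ω)) ∂P : ℝ≥0∞) : EReal)

/-- `E[ρX] ∈ [0,∞]` for a nonnegative payoff. -/
def budget (P : Measure Ω) (ρ X : Ω → ℝ) : ℝ≥0∞ := ∫⁻ ω, ENNReal.ofReal (ρ ω * X ω) ∂P

/-- `X ∈ L⁰₊`: a nonnegative random variable. -/
def Lpos (P : Measure Ω) (X : Ω → ℝ) : Prop := Measurable X ∧ ∀ᵐ ω ∂P, 0 ≤ X ω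

/-- Objective of the Lagrangian risk-minimization problem: `h(X) + λ E[ρX]`. -/
def robj (P : Measure Ω) (m : Measure ℝ) (a₀ a₁ : ℝ) (ρ : Ω → ℝ) (lam : ℝ) (X : Ω → ℝ) : EReal :=
  ((werm P m a₀ a₁ X : ℝ) : EReal) + (lam : EReal) * ((budget P ρ X : ℝ≥0∞) : EReal)

/-- `ψ_X(y) = ∫_{[a₀,a₁]} e^{-ay} / E[e^{-aX}] m(da)`. -/
def psi (P : Measure Ω) (m : Measure ℝ) (a₀ a₁ : ℝ) (X : Ω → ℝ) (y : ℝ) : ℝ :=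
  ∫ a in Set.Icc a₀ a₁, Real.exp (-a * y) / (∫ ω, Real.exp (-a * X ω) ∂P) ∂m

/-- Inverse of `ψ_X` on `(0,∞)` (realized via `sSup`, since `ψ_X` is continuous, strictly
decreasing with limits `∞` at `-∞` and `0` at `∞`). -/
def psiInv (P : Measure Ω) (m : Measure ℝ) (a₀ a₁ : ℝ) (X : Ω → ℝ) (z : ℝ) : ℝ :=
  sSup {y : ℝ | z ≤ psi P m a₀ a₁ X y}

/-- The transform `𝐓X = max(ψ_X⁻¹(λρ), 0)`. -/
def Ttrans (P : Measure Ω) (m : Measure ℝ) (a₀ a₁ lam : ℝ) (ρ : Ω → ℝ) (X : Ω → ℝ) : Ω → ℝ :=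
  fun ω => max (psiInv P m a₀ a₁ X (lam * ρ ω)) 0

/-- `X ∈ 𝒳(x)`: nonnegative and `E[ρX] ≤ x`. -/
def feasible (P : Measure Ω) (ρ : Ω → ℝ) (x : ℝ) (X : Ω → ℝ) : Prop :=
  Lpos P X ∧ budget P ρ X ≤ ENNReal.ofReal x

/-- `γ₁(x)`: the minimal value of `h` over `𝒳(x)`. -/
def gamma1 (P : Measure Ω) (m : Measure ℝ) (a₀ a₁ : ℝ) (ρ : Ω → ℝ) (x : ℝ) : ℝ :=
  sInf (werm P m a₀ a₁ '' {X | feasible P ρ x X})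

/-- Expected utility `E[U(X)] ∈ [-∞,∞]`. -/
def eutil (P : Measure Ω) (U : ℝ → ℝ) (X : Ω → ℝ) : EReal := eint P (fun ω => U (X ω))

/-- Full Lagrangian objective `E[U(X)] - μ h(X) - λ E[ρX]`. -/
def fullObj (P : Measure Ω) (m : Measure ℝ) (a₀ a₁ : ℝ) (ρ : Ω → ℝ) (U : ℝ → ℝ)
    (μ lam : ℝ) (X : Ω → ℝ) : EReal :=
  eutil P U X - ((μ * werm P m a₀ a₁ X : ℝ) : EReal)
    - (lam : EReal) * ((budget P ρ X : ℝ≥0∞) : EReal)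

/-- `e^{-aX}` takes values in `[0,1]` almost surely when `a ≥ 0` and `X ≥ 0`. -/
lemma integrable_exp_neg_mul (P : Measure Ω) [IsProbabilityMeasure P] {X : Ω → ℝ}
    (hX : Lpos P X) {a : ℝ} (ha : 0 ≤ a) : Integrable (fun ω => Real.exp (-a * X ω)) P := by
  have hmX := hX.1
  refine Integrable.of_bound (C := 1) (by fun_prop) ?_
  filter_upwards [hX.2] with ω hω
  rw [Real.norm_eq_abs, abs_of_pos (Real.exp_pos _), Real.exp_le_one_iff]
  nlinarith

lemma laplace_pos (P : Measure Ω) [IsProbabilityMeasure P] {X : Ω → ℝ}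
    (hX : Lpos P X) {a : ℝ} (ha : 0 ≤ a) : 0 < ∫ ω, Real.exp (-a * X ω) ∂P :=
  integral_exp_pos (integrable_exp_neg_mul P hX ha)

lemma laplace_antitone (P : Measure Ω) [IsProbabilityMeasure P] {X : Ω → ℝ}
    (hX : Lpos P X) {a b : ℝ} (ha : 0 ≤ a) (hab : a ≤ b) :
    ∫ ω, Real.exp (-b * X ω) ∂P ≤ ∫ ω, Real.exp (-a * X ω) ∂P := by
  refine integral_mono_ae (integrable_exp_neg_mul P hX (ha.trans hab))
    (integrable_exp_neg_mul P hX ha) ?_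
  filter_upwards [hX.2] with ω hω
  exact Real.exp_le_exp.mpr (by nlinarith)

lemma measurable_laplace (P : Measure Ω) [IsProbabilityMeasure P] {X : Ω → ℝ}
    (hX : Lpos P X) : Measurable (fun a : ℝ => ∫ ω, Real.exp (-a * X ω) ∂P) := by
  have hmX := hX.1
  have h : StronglyMeasurable (fun p : ℝ × Ω => Real.exp (-p.1 * X p.2)) :=
    Measurable.stronglyMeasurable (by fun_prop)
  exact h.integral_prod_right.measurable

/-- The integrand of `ψ_X(y)` is bounded on `[a₀,a₁]`, since its denominator is at least
`E[e^{-a₁X}] > 0` there. -/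
lemma integrableOn_psi (P : Measure Ω) [IsProbabilityMeasure P] {a₀ a₁ : ℝ} (ha₀ : 0 < a₀)
    (ha₀₁ : a₀ < a₁) (m : Measure ℝ) [IsProbabilityMeasure m] {X : Ω → ℝ} (hX : Lpos P X)
    (y : ℝ) :
    IntegrableOn (fun a => Real.exp (-a * y) / (∫ ω, Real.exp (-a * X ω) ∂P))
      (Set.Icc a₀ a₁) m := by
  have hφ := measurable_laplace P hX
  have hpos := laplace_pos P hX (ha₀.trans ha₀₁).le
  refine Integrable.of_bound
    (C := Real.exp (a₁ * |y|) / (∫ ω, Real.exp (-a₁ * X ω) ∂P)) ?_ ?_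
  · exact (Measurable.div (by fun_prop) hφ).aestronglyMeasurable
  · refine (ae_restrict_iff' measurableSet_Icc).mpr (ae_of_all _ fun a ha => ?_)
    have hpa := laplace_pos P hX (ha₀.le.trans ha.1)
    rw [Real.norm_eq_abs, abs_of_pos (div_pos (Real.exp_pos _) hpa)]
    refine div_le_div₀ (Real.exp_pos _).le (Real.exp_le_exp.mpr ?_) hpos
      (laplace_antitone P hX (ha₀.le.trans ha.1) ha.2)
    have h1 : -a * y ≤ a * |y| := by nlinarith [neg_abs_le y, ha₀.le.trans ha.1]
    exact h1.trans (mul_le_mul_of_nonneg_right ha.2 (abs_nonneg y))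

/-- A larger `X` has a smaller Laplace transform, hence a larger `ψ_X`. -/
lemma psi_mono (P : Measure Ω) [IsProbabilityMeasure P] {a₀ a₁ : ℝ} (ha₀ : 0 < a₀)
    (ha₀₁ : a₀ < a₁) (m : Measure ℝ) [IsProbabilityMeasure m] {X₁ X₂ : Ω → ℝ}
    (hX₁ : Lpos P X₁) (hX₂ : Lpos P X₂) (hle : ∀ᵐ ω ∂P, X₂ ω ≤ X₁ ω) (y : ℝ) :
    psi P m a₀ a₁ X₂ y ≤ psi P m a₀ a₁ X₁ y := by
  refine setIntegral_mono_on (integrableOn_psi P ha₀ ha₀₁ m hX₂ y)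
    (integrableOn_psi P ha₀ ha₀₁ m hX₁ y) measurableSet_Icc fun a ha => ?_
  have ha' : 0 ≤ a := ha₀.le.trans ha.1
  refine div_le_div_of_nonneg_left (Real.exp_pos _).le (laplace_pos P hX₁ ha') ?_
  refine integral_mono_ae (integrable_exp_neg_mul P hX₁ ha')
    (integrable_exp_neg_mul P hX₂ ha') ?_
  filter_upwards [hle] with ω hω
  exact Real.exp_le_exp.mpr (by nlinarith)

/-- `ψ_X` decays at least like `e^{-a₀y}` as `y → ∞`. -/
lemma psi_le (P : Measure Ω) [IsProbabilityMeasure P] {a₀ a₁ : ℝ} (ha₀ : 0 < a₀)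
    (ha₀₁ : a₀ < a₁) (m : Measure ℝ) [IsProbabilityMeasure m] (hm : m (Set.Icc a₀ a₁) = 1)
    {X : Ω → ℝ} (hX : Lpos P X) {y : ℝ} (hy : 0 ≤ y) :
    psi P m a₀ a₁ X y ≤ Real.exp (-a₀ * y) / (∫ ω, Real.exp (-a₁ * X ω) ∂P) := by
  have hpos := laplace_pos P hX (ha₀.trans ha₀₁).le
  calc psi P m a₀ a₁ X y
      ≤ ∫ _ in Set.Icc a₀ a₁, Real.exp (-a₀ * y) / (∫ ω, Real.exp (-a₁ * X ω) ∂P) ∂m := by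
        refine setIntegral_mono_on (integrableOn_psi P ha₀ ha₀₁ m hX y)
          (integrable_const _) measurableSet_Icc fun a ha => ?_
        refine div_le_div₀ (Real.exp_pos _).le (Real.exp_le_exp.mpr ?_) hpos
          (laplace_antitone P hX (ha₀.le.trans ha.1) ha.2)
        nlinarith [ha.1]
    _ = _ := by simp [measureReal_def, hm]

/-- The set whose supremum defines `ψ_X⁻¹(z)` is bounded above when `z > 0`, so that the real
`sSup` is a genuine supremum as soon as the set is nonempty. -/
lemma bddAbove_psi (P : Measure Ω) [IsProbabilityMeasure P] {a₀ a₁ : ℝ} (ha₀ : 0 < a₀)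
    (ha₀₁ : a₀ < a₁) (m : Measure ℝ) [IsProbabilityMeasure m] (hm : m (Set.Icc a₀ a₁) = 1)
    {X : Ω → ℝ} (hX : Lpos P X) {z : ℝ} (hz : 0 < z) :
    BddAbove {y : ℝ | z ≤ psi P m a₀ a₁ X y} := by
  have hpos := laplace_pos P hX (ha₀.trans ha₀₁).le
  -- From `z φ ≤ e^{-a₀y}` and `a₀y ≤ e^{a₀y}`, with `φ = E[e^{-a₁X}]`, one gets `y ≤ 1/(a₀ z φ)`.
  refine ⟨1 / (a₀ * (z * ∫ ω, Real.exp (-a₁ * X ω) ∂P)), fun y hy => ?_⟩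
  rcases le_or_gt y 0 with h0 | h0
  · exact h0.trans (by positivity)
  have h1 := le_trans hy (psi_le P ha₀ ha₀₁ m hm hX h0.le)
  rw [le_div_iff₀ hpos] at h1
  rw [le_div_iff₀ (by positivity)]
  have h2 : a₀ * y ≤ Real.exp (a₀ * y) := by linarith [Real.add_one_le_exp (a₀ * y)]
  calc y * (a₀ * (z * ∫ ω, Real.exp (-a₁ * X ω) ∂P))
      = (a₀ * y) * (z * ∫ ω, Real.exp (-a₁ * X ω) ∂P) := by ring
    _ ≤ Real.exp (a₀ * y) * Real.exp (-a₀ * y) :=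
        mul_le_mul h2 h1 (by positivity) (Real.exp_pos _).le
    _ = 1 := by rw [← Real.exp_add]; simp

/-- the transform `𝐓X = max(ψ_X⁻¹(λρ), 0)` is monotone on `L⁰₊`:
if `X₁ ≥ X₂` a.s. then `𝐓X₁ ≥ 𝐓X₂` a.s. -/
theorem Ttrans_monotone (P : Measure Ω) [IsProbabilityMeasure P]
    (a₀ a₁ : ℝ) (ha₀ : 0 < a₀) (ha₀₁ : a₀ < a₁)
    (m : Measure ℝ) [IsProbabilityMeasure m] (hm : m (Set.Icc a₀ a₁) = 1)
    (ρ : Ω → ℝ) (hmρ : Measurable ρ) (hρ0 : ∀ᵐ ω ∂P, 0 < ρ ω) (hρint : Integrable ρ P)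
    (lam : ℝ) (hlam : 0 < lam)
    (X₁ X₂ : Ω → ℝ) (hX₁ : Lpos P X₁) (hX₂ : Lpos P X₂)
    (hle : ∀ᵐ ω ∂P, X₂ ω ≤ X₁ ω) :
    ∀ᵐ ω ∂P, Ttrans P m a₀ a₁ lam ρ X₂ ω ≤ Ttrans P m a₀ a₁ lam ρ X₁ ω := by
  filter_upwards [hρ0] with ω hω
  have hz : 0 < lam * ρ ω := mul_pos hlam hω
  unfold Ttrans psiInv
  rcases Set.eq_empty_or_nonempty {y : ℝ | lam * ρ ω ≤ psi P m a₀ a₁ X₂ y} with h | h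
  · -- `sSup ∅ = 0` in `ℝ`, which the truncation at `0` absorbs.
    rw [h]
    simp
  · exact max_le_max_right 0 (csSup_le_csSup (bddAbove_psi P ha₀ ha₀₁ m hm hX₁ hz) h
      fun y hy => le_trans hy (psi_mono P ha₀ ha₀₁ m hX₁ hX₂ hle y))
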